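/- Let p ≥ 2 be a natural number, set n = 2p + 1 (so n ≥ 5 is odd and 2p = n−1), and let 𝓡, L, Λ, κ₀, E2, B2 be real constants. Suppose f : ℝ → ℝ is such that for every r > 0 the function r ↦ r^(n−3) * f(r) is differentiable at r with derivative (𝓡/(n−2)) r^(n−4) + 2 L r^(n−3) − (2Λ/(n−2)) r^(n−2) − κ₀ [ ((n−3)/(2(n−2))) E2 · r^(−3) + (2/((n−1)(n−2))) B2 · r^(−1) ]. Then there exists μ ∈ ℝ such that for all r > 0: f(r) = 𝓡/((n−2)(n−3)) + (2L/(n−2)) r − (2Λ/((n−1)(n−2))) r² − μ r^(3−n) + (κ₀/(n−2)) [ ((n−3)/4) E2 · r^(1−n) − (2/(n−1)) B2 · (Real.log r) · r^(3−n) ]. -/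

import Mathlib

/-!
The weight `r ^ (n - 3)` is an integrating factor for the radial Einstein equation, so the metric
function is determined up to the constant `μ` by a primitive of the source. Every power of `r` in
the source integrates to a power, except the magnetic term: in the resonant case `2p = n - 1` it
scales as `r⁻¹`, and this is where the logarithm comes from.
-/

open Set

theorem exists_eq_inv_smul_add_of_hasDerivAt_smul {𝕜 E : Type*} [RCLike 𝕜]
    [NormedAddCommGroup E] [NormedSpace 𝕜 E] {s : Set 𝕜} (hs : IsOpen s) (hs' : IsPreconnected s)
    {w : 𝕜 → 𝕜} {f F F' : 𝕜 → E} (hw : ∀ x ∈ s, w x ≠ 0)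
    (hwf : ∀ x ∈ s, HasDerivAt (fun t => w t • f t) (F' x) x)
    (hF : ∀ x ∈ s, HasDerivAt F (F' x) x) :
    ∃ C : E, ∀ x ∈ s, f x = (w x)⁻¹ • (F x + C) := by
  obtain ⟨C, hC⟩ := hs.exists_eq_add_of_deriv_eq hs'
    (fun x hx => (hwf x hx).differentiableAt.differentiableWithinAt)
    (fun x hx => (hF x hx).differentiableAt.differentiableWithinAt)
    (fun x hx => (hwf x hx).deriv.trans (hF x hx).deriv.symm)
  exact ⟨C, fun x hx => (eq_inv_smul_iff₀ (hw x hx)).2 (hC hx)⟩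

theorem hasDerivAt_zpow_div {𝕜 : Type*} [NontriviallyNormedField 𝕜] [CharZero 𝕜] {m k : ℤ}
    (hmk : m + 1 = k) (hk : k ≠ 0) {x : 𝕜} (hx : x ≠ 0) :
    HasDerivAt (fun t : 𝕜 => t ^ k / (k : 𝕜)) (x ^ m) x := by
  refine ((hasDerivAt_zpow k x (.inl hx)).div_const (k : 𝕜)).congr_deriv ?_
  rw [mul_div_cancel_left₀ _ (Int.cast_ne_zero.2 hk), ← hmk, add_sub_cancel_right]

section RadialEquation

variable (n : ℤ) (𝓡 L Λ κ₀ E2 B2 : ℝ)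

/-- The source of the radial Einstein equation `(r ^ (n - 3) * f)' = source` for the metric function
`f = 2H` in the resonant case. The dimension `n` is an arbitrary integer here. -/
noncomputable def rtRadialSource (r : ℝ) : ℝ :=
  (𝓡 / ((n : ℝ) - 2)) * r ^ (n - 4) + 2 * L * r ^ (n - 3)
    - (2 * Λ / ((n : ℝ) - 2)) * r ^ (n - 2)
    - κ₀ * ((((n : ℝ) - 3) / (2 * ((n : ℝ) - 2))) * E2 * r ^ (-3 : ℤ)
      + (2 / (((n : ℝ) - 1) * ((n : ℝ) - 2))) * B2 * r ^ (-1 : ℤ))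

/-- The term-by-term primitive of `rtRadialSource`, each `r ^ (k - 1)` with `k ≠ 0` being integrated
to `r ^ k / k`. -/
noncomputable def rtRadialPrimitive (r : ℝ) : ℝ :=
  (𝓡 / ((n : ℝ) - 2)) * (r ^ (n - 3) / ((n - 3 : ℤ) : ℝ))
    + 2 * L * (r ^ (n - 2) / ((n - 2 : ℤ) : ℝ))
    - (2 * Λ / ((n : ℝ) - 2)) * (r ^ (n - 1) / ((n - 1 : ℤ) : ℝ))
    - κ₀ * ((((n : ℝ) - 3) / (2 * ((n : ℝ) - 2))) * E2 * (r ^ (-2 : ℤ) / ((-2 : ℤ) : ℝ))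
      + (2 / (((n : ℝ) - 1) * ((n : ℝ) - 2))) * B2 * Real.log r)

/-- The metric function `2H` of the paper's formula (H_log−), with mass parameter `μ`. -/
noncomputable def rtMetricFunction (μ r : ℝ) : ℝ :=
  𝓡 / (((n : ℝ) - 2) * ((n : ℝ) - 3)) + (2 * L / ((n : ℝ) - 2)) * r
    - (2 * Λ / (((n : ℝ) - 1) * ((n : ℝ) - 2))) * r ^ 2 - μ * r ^ (3 - n)
    + (κ₀ / ((n : ℝ) - 2)) *
      ((((n : ℝ) - 3) / 4) * E2 * r ^ (1 - n)
        - (2 / ((n : ℝ) - 1)) * B2 * Real.log r * r ^ (3 - n))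

variable {n}

theorem hasDerivAt_rtRadialPrimitive (h1 : n ≠ 1) (h2 : n ≠ 2) (h3 : n ≠ 3) {r : ℝ} (hr : r ≠ 0) :
    HasDerivAt (rtRadialPrimitive n 𝓡 L Λ κ₀ E2 B2) (rtRadialSource n 𝓡 L Λ κ₀ E2 B2 r) r := by
  have curvature : HasDerivAt (fun s : ℝ => s ^ (n - 3) / ((n - 3 : ℤ) : ℝ)) (r ^ (n - 4)) r :=
    hasDerivAt_zpow_div (by ring) (sub_ne_zero.2 h3) hr
  have expansion : HasDerivAt (fun s : ℝ => s ^ (n - 2) / ((n - 2 : ℤ) : ℝ)) (r ^ (n - 3)) r :=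
    hasDerivAt_zpow_div (by ring) (sub_ne_zero.2 h2) hr
  have cosmological : HasDerivAt (fun s : ℝ => s ^ (n - 1) / ((n - 1 : ℤ) : ℝ)) (r ^ (n - 2)) r :=
    hasDerivAt_zpow_div (by ring) (sub_ne_zero.2 h1) hr
  have electric : HasDerivAt (fun s : ℝ => s ^ (-2 : ℤ) / ((-2 : ℤ) : ℝ)) (r ^ (-3 : ℤ)) r :=
    hasDerivAt_zpow_div (by norm_num) (by norm_num) hr
  have magnetic : HasDerivAt Real.log (r ^ (-1 : ℤ)) r :=
    zpow_neg_one r ▸ Real.hasDerivAt_log hr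
  exact (((curvature.const_mul _).add (expansion.const_mul _)).sub (cosmological.const_mul _)).sub
    (((electric.const_mul _).add (magnetic.const_mul _)).const_mul _)

theorem inv_zpow_mul_rtRadialPrimitive_add (C : ℝ) {r : ℝ} (hr : r ≠ 0) :
    (r ^ (n - 3))⁻¹ * (rtRadialPrimitive n 𝓡 L Λ κ₀ E2 B2 r + C) =
      rtMetricFunction n 𝓡 L Λ κ₀ E2 B2 (-C) r := by
  have linear_pow : r ^ (n - 2) = r ^ (n - 3) * r := by
    rw [← zpow_add_one₀ hr]; ring_nf
  have quadratic_pow : r ^ (n - 1) = r ^ (n - 3) * r ^ 2 := by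
    rw [← zpow_natCast, ← zpow_add₀ hr]; ring_nf
  have electric_pow : r ^ (1 - n) = (r ^ (n - 3))⁻¹ * r ^ (-2 : ℤ) := by
    rw [← zpow_neg, ← zpow_add₀ hr]; ring_nf
  have mass_pow : r ^ (3 - n) = (r ^ (n - 3))⁻¹ := by
    rw [← zpow_neg, neg_sub]
  have weight_ne_zero : r ^ (n - 3) ≠ 0 := zpow_ne_zero _ hr
  rw [rtRadialPrimitive, rtMetricFunction, linear_pow, quadratic_pow, electric_pow, mass_pow]
  push_cast
  field_simp
  ring

theorem RT_metric_function_log_minus_general (h1 : n ≠ 1) (h2 : n ≠ 2) (h3 : n ≠ 3)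
    {s : Set ℝ} (hs : IsOpen s) (hs' : IsPreconnected s) (hs_pos : s ⊆ Ioi 0) {f : ℝ → ℝ}
    (hf : ∀ r ∈ s, HasDerivAt (fun t : ℝ => t ^ (n - 3) * f t)
      (rtRadialSource n 𝓡 L Λ κ₀ E2 B2 r) r) :
    ∃ μ : ℝ, ∀ r ∈ s, f r = rtMetricFunction n 𝓡 L Λ κ₀ E2 B2 μ r := by
  have ne_zero : ∀ r ∈ s, r ≠ 0 := fun r hr => (hs_pos hr).ne'
  obtain ⟨C, hC⟩ := exists_eq_inv_smul_add_of_hasDerivAt_smul hs hs'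
    (fun r hr => zpow_ne_zero (n - 3) (ne_zero r hr)) hf
    (fun r hr => hasDerivAt_rtRadialPrimitive 𝓡 L Λ κ₀ E2 B2 h1 h2 h3 (ne_zero r hr))
  exact ⟨-C, fun r hr => (hC r hr).trans
    (inv_zpow_mul_rtRadialPrimitive_add 𝓡 L Λ κ₀ E2 B2 C (ne_zero r hr))⟩

end RadialEquation

/-- Radial integration of the Einstein equation for the Robinson–Trautman
metric function `2H` in the resonant case `2p = n - 1` (`n = 2p + 1` odd):
the solution contains the logarithmic term of the paper's formula (H_log−). -/
theorem RT_metric_function_log_minus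
    (p : ℕ) (hp : 2 ≤ p) (n : ℕ) (hn : n = 2 * p + 1)
    (𝓡 L Λ κ₀ E2 B2 : ℝ) (f : ℝ → ℝ)
    (hf : ∀ r : ℝ, 0 < r →
      HasDerivAt (fun s : ℝ => s ^ ((n : ℤ) - 3) * f s)
        ((𝓡 / ((n : ℝ) - 2)) * r ^ ((n : ℤ) - 4)
          + 2 * L * r ^ ((n : ℤ) - 3)
          - (2 * Λ / ((n : ℝ) - 2)) * r ^ ((n : ℤ) - 2)
          - κ₀ * ( (((n : ℝ) - 3) / (2 * ((n : ℝ) - 2))) * E2 * r ^ (-3 : ℤ)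
            + (2 / (((n : ℝ) - 1) * ((n : ℝ) - 2))) * B2 * r ^ (-1 : ℤ) )) r) :
    ∃ μ : ℝ, ∀ r : ℝ, 0 < r →
      f r = 𝓡 / (((n : ℝ) - 2) * ((n : ℝ) - 3))
        + (2 * L / ((n : ℝ) - 2)) * r
        - (2 * Λ / (((n : ℝ) - 1) * ((n : ℝ) - 2))) * r ^ 2
        - μ * r ^ (3 - (n : ℤ))
        + (κ₀ / ((n : ℝ) - 2)) *
          ( (((n : ℝ) - 3) / 4) * E2 * r ^ (1 - (n : ℤ))
            - (2 / ((n : ℝ) - 1)) * B2 * Real.log r * r ^ (3 - (n : ℤ)) ) := by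
  simpa only [rtMetricFunction, Int.cast_natCast, mem_Ioi] using
    RT_metric_function_log_minus_general (n := n) 𝓡 L Λ κ₀ E2 B2 (by omega) (by omega) (by omega)
      isOpen_Ioi isPreconnected_Ioi Subset.rfl
      (by simpa only [rtRadialSource, Int.cast_natCast, mem_Ioi] using hf)
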